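/- CLT with predictive centering: suppose (X_n) is G-c.i.d., f and f² are integrable at X_1, sup_n E[C_n²] < ∞ where C_n = n^{-1/2}(f(X_1)+...+f(X_n) − n E[f(X_{n+1})|G_n]), and M_n = (1/n) Σ_{k=1}^n (f(X_k) − k E[f(X_{k+1})|G_k] + (k−1) E[f(X_k)|G_{k-1}])² → σ² a.s. for some real random variable σ². Then (C_n) converges stably with representing measure N(0, σ²). -/

import Mathlib

open MeasureTheory ProbabilityTheory Filter

/-- `(X n)` (indexed from 1) is conditionally identically distributed with respect to `𝒢`. -/
def IsCID {Ω E : Type*} {mΩ : MeasurableSpace Ω} [MeasurableSpace E]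
    (μ : Measure Ω) (𝒢 : Filtration ℕ mΩ) (X : ℕ → Ω → E) : Prop :=
  ∀ (f : E → ℝ), Measurable f → (∃ C, ∀ x, |f x| ≤ C) →
    ∀ n k : ℕ, n < k →
      μ[(fun ω => f (X k ω)) | 𝒢 n] =ᵐ[μ] μ[(fun ω => f (X (n + 1) ω)) | 𝒢 n]

/-- `(W n)` converges stably with representing measure `ω ↦ N(0, L ω)`. -/
def StableGaussLimit {Ω : Type*} {mΩ : MeasurableSpace Ω}
    (μ : Measure Ω) (W : ℕ → Ω → ℝ) (L : Ω → ℝ) : Prop :=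
  ∀ H : Set Ω, MeasurableSet H → μ H ≠ 0 →
    ∀ g : BoundedContinuousFunction ℝ ℝ,
      Tendsto (fun n => ∫ ω, g (W n ω) ∂μ[|H]) atTop
        (nhds (∫ ω, ∫ x, g x ∂(gaussianReal 0 (L ω).toNNReal) ∂μ[|H]))

/-!
For a martingale difference sequence, McLeish's product `∏ (1 + i x_k)` is a martingale; once the
terms following an excess of the sum of squares over a level `c` are dropped, which is a predictable
truncation, its modulus is bounded up to the maximal increment. Its early factors being
asymptotically trivial, it tends to `1` weakly in `L¹`. For real arguments, `∏ (1 + i x_k)` is close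
to `exp (i ∑ x_k)` times `exp (∑ x_k² / 2)`, and the sums of squares converge to `σ²`; hence on each
event `{σ² < c} ∩ H` the integral of `exp (i t C n)` tends to that of `exp (-t² σ² / 2)`, and
convergence of characteristic functions on every event is stable convergence. Conditional identity
in distribution makes `f (X 1) + ⋯ + f (X n) - n E[f (X (n + 1)) | 𝒢 n]` a martingale, `M n` is the
average of its squared increments, and convergence of these averages together with the `L²` bound
makes the largest increment negligible.
-/

open scoped Topology

/-! ### Deterministic estimates -/

/-- The largest modulus among the first `n` terms of a sequence, with value `0` for `n = 0`. -/
noncomputable def maxAbs (x : ℕ → ℝ) (n : ℕ) : ℝ :=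
  ((Finset.range n).sup fun k => ‖x k‖₊ : NNReal)

/-- McLeish's product `∏ (1 + i x_k)` over the first `n` terms of a sequence: a substitute for
`exp (i ∑ x_k)` which, unlike the exponential, turns martingale differences into a martingale. -/
noncomputable def mcleishProd (x : ℕ → ℝ) (n : ℕ) : ℂ :=
  ∏ k ∈ Finset.range n, (1 + Complex.I * x k)

/-- The sequence `x` with `x k` replaced by `0` as soon as the sum of squares of the preceding terms
exceeds `c`. The term `x k` itself does not enter the test, which keeps the truncation
predictable. -/
noncomputable def sqTruncate (c : ℝ) (x : ℕ → ℝ) (k : ℕ) : ℝ :=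
  if ∑ j ∈ Finset.range k, x j ^ 2 ≤ c then x k else 0

/-- The remainder of `log (1 + i x)` beyond second order. -/
noncomputable def logRem (x : ℝ) : ℂ :=
  Complex.log (1 + Complex.I * x) - (Complex.I * x + (x : ℂ) ^ 2 / 2)

section MaxAbs

variable {x : ℕ → ℝ} {n : ℕ}

lemma maxAbs_nonneg (x : ℕ → ℝ) (n : ℕ) : 0 ≤ maxAbs x n := NNReal.coe_nonneg _

lemma abs_le_maxAbs {k : ℕ} (hk : k < n) : |x k| ≤ maxAbs x n :=
  NNReal.coe_le_coe.2 <|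
    Finset.le_sup (f := fun k => ‖x k‖₊) (Finset.mem_range.2 hk)

lemma maxAbs_le {B : ℝ} (hB : 0 ≤ B) (h : ∀ k < n, |x k| ≤ B) : maxAbs x n ≤ B := by
  lift B to NNReal using hB
  exact NNReal.coe_le_coe.2 <| Finset.sup_le fun k hk => h k (Finset.mem_range.1 hk)

lemma maxAbs_mono (x : ℕ → ℝ) : Monotone (maxAbs x) := fun _ _ h =>
  maxAbs_le (maxAbs_nonneg _ _) fun _ hk => abs_le_maxAbs (hk.trans_le h)

lemma maxAbs_const_mul (c : ℝ) (x : ℕ → ℝ) (n : ℕ) :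
    maxAbs (fun k => c * x k) n = |c| * maxAbs x n := by
  simp only [maxAbs, nnnorm_mul, ← NNReal.mul_finset_sup, NNReal.coe_mul, coe_nnnorm,
    Real.norm_eq_abs]

lemma maxAbs_le_sum_abs (x : ℕ → ℝ) (n : ℕ) : maxAbs x n ≤ ∑ k ∈ Finset.range n, |x k| :=
  maxAbs_le (Finset.sum_nonneg fun _ _ => abs_nonneg _) fun _ hk =>
    Finset.single_le_sum (f := fun k => |x k|) (fun _ _ => abs_nonneg _) (Finset.mem_range.2 hk)

lemma sq_maxAbs_le_sum_sq (x : ℕ → ℝ) (n : ℕ) :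
    maxAbs x n ^ 2 ≤ ∑ k ∈ Finset.range n, x k ^ 2 := by
  refine (Real.le_sqrt (maxAbs_nonneg x n) (Finset.sum_nonneg fun _ _ => sq_nonneg _)).1 <|
    maxAbs_le (Real.sqrt_nonneg _) fun k hk => ?_
  exact Real.abs_le_sqrt <|
    Finset.single_le_sum (f := fun k => x k ^ 2) (fun _ _ => sq_nonneg _) (Finset.mem_range.2 hk)

lemma tendsto_sq_div_of_tendsto_sum_sq_div {v : ℝ}
    (h : Tendsto (fun n : ℕ => (∑ k ∈ Finset.range n, x k ^ 2) / n) atTop (𝓝 v)) :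
    Tendsto (fun n : ℕ => x n ^ 2 / (n + 1 : ℕ)) atTop (𝓝 0) := by
  have hshift := (tendsto_add_atTop_iff_nat 1).2 h
  have hratio : Tendsto (fun n : ℕ => (n : ℝ) / (n + 1)) atTop (𝓝 1) :=
    tendsto_natCast_div_add_atTop 1
  have hdiff := hshift.sub (h.mul hratio)
  rw [mul_one, sub_self] at hdiff
  refine hdiff.congr' ?_
  filter_upwards [eventually_gt_atTop 0] with n hn
  rw [Finset.sum_range_succ]
  push_cast
  field_simp
  ring

lemma tendsto_maxAbs_div_sqrt {v : ℝ}
    (h : Tendsto (fun n : ℕ => (∑ k ∈ Finset.range n, x k ^ 2) / n) atTop (𝓝 v)) :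
    Tendsto (fun n : ℕ => maxAbs x n / √n) atTop (𝓝 0) := by
  refine (tendsto_order.2 ⟨fun a ha => Eventually.of_forall fun n =>
    ha.trans_le (div_nonneg (maxAbs_nonneg x n) (Real.sqrt_nonneg n)), fun ε hε => ?_⟩)
  obtain ⟨N, hN⟩ := eventually_atTop.1 <|
    (tendsto_sq_div_of_tendsto_sum_sq_div h).eventually_lt_const
      (show 0 < (ε / 2) ^ 2 by positivity)
  have hterm (k : ℕ) (hk : N ≤ k) : |x k| ≤ ε / 2 * √(k + 1 : ℕ) := by
    refine abs_le_of_sq_le_sq ?_ (by positivity)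
    rw [mul_pow, Real.sq_sqrt (Nat.cast_nonneg _), ← div_le_iff₀ (by positivity)]
    exact (hN k hk).le
  have hmax (n : ℕ) : maxAbs x n ≤ maxAbs x N + ε / 2 * √n := by
    have h0 := maxAbs_nonneg x N
    refine maxAbs_le (by positivity) fun k hk => ?_
    rcases lt_or_ge k N with hkN | hkN
    · exact (abs_le_maxAbs hkN).trans (le_add_of_nonneg_right (by positivity))
    · refine (hterm k hkN).trans (le_add_of_nonneg_of_le h0 ?_)
      gcongr
      exact hk
  have hhead : Tendsto (fun n : ℕ => maxAbs x N / √n) atTop (𝓝 0) :=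
    tendsto_const_nhds.div_atTop (Real.tendsto_sqrt_atTop.comp tendsto_natCast_atTop_atTop)
  filter_upwards [hhead.eventually_lt_const (half_pos hε), eventually_gt_atTop 0] with n hn hpos
  have : 0 < √(n : ℝ) := Real.sqrt_pos.2 (Nat.cast_pos.2 hpos)
  calc maxAbs x n / √n ≤ (maxAbs x N + ε / 2 * √n) / √n := by gcongr; exact hmax n
    _ = maxAbs x N / √n + ε / 2 := by field_simp
    _ < ε := by linarith

end MaxAbs

section McLeishProd

variable {x : ℕ → ℝ} {n : ℕ} {c : ℝ}

lemma norm_one_add_I_mul_le_exp (x : ℝ) : ‖1 + Complex.I * (x : ℂ)‖ ≤ Real.exp (x ^ 2 / 2) := by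
  have hnorm : ‖1 + Complex.I * (x : ℂ)‖ ^ 2 = x ^ 2 + 1 := by
    rw [← Complex.normSq_eq_norm_sq, Complex.normSq_apply]
    simp
    ring
  refine le_of_sq_le_sq ?_ (Real.exp_pos _).le
  rw [hnorm, ← Real.exp_nat_mul, Nat.cast_two, mul_div_cancel₀ _ two_ne_zero]
  exact Real.add_one_le_exp _

lemma norm_mcleishProd_le_exp (x : ℕ → ℝ) (n : ℕ) :
    ‖mcleishProd x n‖ ≤ Real.exp ((∑ k ∈ Finset.range n, x k ^ 2) / 2) := by
  rw [mcleishProd, norm_prod, Finset.sum_div, Real.exp_sum]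
  exact Finset.prod_le_prod (fun _ _ => norm_nonneg _) fun k _ => norm_one_add_I_mul_le_exp (x k)

lemma mcleishProd_succ (x : ℕ → ℝ) (n : ℕ) :
    mcleishProd x (n + 1) = mcleishProd x n + x n • (Complex.I * mcleishProd x n) := by
  rw [mcleishProd, Finset.prod_range_succ, ← mcleishProd, Complex.real_smul]
  ring

lemma sum_sq_le_of_le {m : ℕ} (hmn : m ≤ n) (h : ∑ k ∈ Finset.range n, x k ^ 2 ≤ c) :
    ∑ k ∈ Finset.range m, x k ^ 2 ≤ c :=
  (Finset.sum_le_sum_of_subset_of_nonneg (Finset.range_mono hmn) fun _ _ _ => sq_nonneg _).trans h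

lemma mcleishProd_sqTruncate_of_sum_sq_le (h : ∑ k ∈ Finset.range n, x k ^ 2 ≤ c) :
    mcleishProd (sqTruncate c x) n = mcleishProd x n :=
  Finset.prod_congr rfl fun k hk => by
    rw [sqTruncate, if_pos (sum_sq_le_of_le (Finset.mem_range.1 hk).le h)]

lemma norm_mul_sqTruncate_le (c : ℝ) (x : ℕ → ℝ) (n : ℕ) :
    ‖mcleishProd (sqTruncate c x) n‖ * |sqTruncate c x n| ≤ Real.exp (c / 2) * |x n| := by
  by_cases h : ∑ k ∈ Finset.range n, x k ^ 2 ≤ c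
  · rw [mcleishProd_sqTruncate_of_sum_sq_le h, sqTruncate, if_pos h]
    gcongr
    exact (norm_mcleishProd_le_exp x n).trans (by gcongr)
  · rw [sqTruncate, if_neg h, abs_zero, mul_zero]
    positivity

lemma norm_mcleishProd_sqTruncate_le (hc : 0 ≤ c) (x : ℕ → ℝ) (n : ℕ) :
    ‖mcleishProd (sqTruncate c x) n‖ ≤ Real.exp (c / 2) * (1 + maxAbs x n) := by
  induction n with
  | zero =>
    have : 1 ≤ Real.exp (c / 2) := Real.one_le_exp (by positivity)
    simpa [mcleishProd, maxAbs] using this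
  | succ n ih =>
    by_cases h : ∑ k ∈ Finset.range n, x k ^ 2 ≤ c
    · have hfactor : ‖1 + Complex.I * (x n : ℂ)‖ ≤ 1 + maxAbs x (n + 1) := by
        refine (norm_add_le _ _).trans ?_
        simpa using abs_le_maxAbs (x := x) n.lt_succ_self
      rw [mcleishProd, Finset.prod_range_succ, ← mcleishProd, norm_mul,
        mcleishProd_sqTruncate_of_sum_sq_le h, sqTruncate, if_pos h]
      gcongr
      exact (norm_mcleishProd_le_exp x n).trans (by gcongr)
    · rw [mcleishProd_succ, sqTruncate, if_neg h, zero_smul, add_zero]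
      exact ih.trans (by gcongr; exact maxAbs_mono x n.le_succ)

lemma norm_mcleishProd_sqTruncate_sub_one_le (c : ℝ) (x : ℕ → ℝ) {m : ℕ} (hmn : m ≤ n) :
    ‖mcleishProd (sqTruncate c x) m - 1‖ ≤ m * Real.exp (c / 2) * maxAbs x n := by
  induction m with
  | zero => simp [mcleishProd]
  | succ m ih =>
    have hincr : ‖sqTruncate c x m • (Complex.I * mcleishProd (sqTruncate c x) m)‖
        ≤ Real.exp (c / 2) * maxAbs x n := by
      rw [norm_smul, norm_mul, Complex.norm_I, one_mul, mul_comm]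
      refine (norm_mul_sqTruncate_le c x m).trans ?_
      gcongr
      exact abs_le_maxAbs hmn
    rw [mcleishProd_succ, add_sub_right_comm]
    refine (norm_add_le_of_le (ih (Nat.le_of_succ_le hmn)) hincr).trans_eq ?_
    push_cast
    ring

end McLeishProd

section Exponential

lemma norm_logRem_le {x : ℝ} (hx : |x| ≤ 1 / 2) : ‖logRem x‖ ≤ |x| * x ^ 2 := by
  have hnorm : ‖Complex.I * (x : ℂ)‖ = |x| := by simp
  have htaylor : Complex.logTaylor (2 + 1) (Complex.I * x) = Complex.I * x + (x : ℂ) ^ 2 / 2 := by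
    simp [Complex.logTaylor_succ, Complex.logTaylor_zero, mul_pow]
    ring
  have hlog := Complex.norm_log_sub_logTaylor_le 2 (z := Complex.I * x) (by rw [hnorm]; linarith)
  rw [htaylor, hnorm] at hlog
  have hinv : (1 - |x|)⁻¹ ≤ 2 := inv_le_of_inv_le₀ two_pos (by linarith)
  calc ‖logRem x‖ ≤ |x| ^ 3 * (1 - |x|)⁻¹ / 3 := by
        simpa only [logRem, Nat.cast_ofNat, two_add_one_eq_three] using hlog
    _ ≤ |x| ^ 3 * 2 / 3 := by gcongr
    _ ≤ |x| * x ^ 2 := by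
      rw [← sq_abs x]
      linarith [pow_nonneg (abs_nonneg x) 3]

lemma mcleishProd_eq_exp (x : ℕ → ℝ) (n : ℕ) :
    mcleishProd x n = Complex.exp (Complex.I * ↑(∑ k ∈ Finset.range n, x k)
      + (↑(∑ k ∈ Finset.range n, x k ^ 2) / 2 + ∑ k ∈ Finset.range n, logRem (x k))) := by
  have hfactor (k : ℕ) : 1 + Complex.I * (x k : ℂ)
      = Complex.exp (Complex.I * x k + (x k : ℂ) ^ 2 / 2 + logRem (x k)) := by
    have hne : 1 + Complex.I * (x k : ℂ) ≠ 0 := fun h => by simpa using congrArg Complex.re h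
    rw [logRem, add_sub_cancel, Complex.exp_log hne]
  rw [mcleishProd, Finset.prod_congr rfl fun k _ => hfactor k, ← Complex.exp_sum]
  simp only [Finset.sum_add_distrib, ← Finset.mul_sum, ← Finset.sum_div, Complex.ofReal_sum,
    Complex.ofReal_pow, add_assoc]

lemma norm_sum_logRem_le {x : ℕ → ℝ} {n : ℕ} (hx : maxAbs x n ≤ 1 / 2) :
    ‖∑ k ∈ Finset.range n, logRem (x k)‖ ≤ maxAbs x n * ∑ k ∈ Finset.range n, x k ^ 2 := by
  rw [Finset.mul_sum]
  refine norm_sum_le_of_le _ fun k hk => ?_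
  have hmax := abs_le_maxAbs (x := x) (Finset.mem_range.1 hk)
  exact (norm_logRem_le (hmax.trans hx)).trans (by gcongr)

variable {x : ℕ → ℕ → ℝ} {v : ℝ}

lemma tendsto_exp_sub_mcleishProd
    (hmax : Tendsto (fun n => maxAbs (x n) n) atTop (𝓝 0))
    (hsq : Tendsto (fun n => ∑ k ∈ Finset.range n, x n k ^ 2) atTop (𝓝 v)) :
    Tendsto (fun n => Complex.exp (Complex.I * ↑(∑ k ∈ Finset.range n, x n k))
      - mcleishProd (x n) n * ↑(Real.exp (-v / 2))) atTop (𝓝 0) := by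
  have hrem : Tendsto (fun n => ∑ k ∈ Finset.range n, logRem (x n k)) atTop (𝓝 0) := by
    refine squeeze_zero_norm' ?_ (by simpa only [zero_mul] using hmax.mul hsq)
    filter_upwards [hmax.eventually_le_const (show (0 : ℝ) < 1 / 2 by norm_num)] with n hn
    exact norm_sum_logRem_le hn
  have hexponent : Tendsto (fun n => (↑(∑ k ∈ Finset.range n, x n k ^ 2) / 2
      + ∑ k ∈ Finset.range n, logRem (x n k)) + (-v / 2 : ℂ)) atTop (𝓝 0) := by
    have hsq' := (Complex.continuous_ofReal.tendsto v).comp hsq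
    simpa [neg_div] using ((hsq'.div_const 2).add hrem).add_const (-v / 2 : ℂ)
  have hratio := ((Complex.continuous_exp.tendsto 0).comp hexponent).const_sub 1
  rw [Complex.exp_zero, sub_self] at hratio
  refine squeeze_zero_norm (fun n => le_of_eq ?_) (by simpa only [norm_zero] using hratio.norm)
  rw [mcleishProd_eq_exp, Complex.ofReal_exp, Complex.ofReal_div, Complex.ofReal_neg,
    Complex.ofReal_ofNat, ← Complex.exp_add, add_assoc, Complex.exp_add, ← mul_one_sub, norm_mul,
    mul_comm Complex.I, Complex.norm_exp_ofReal_mul_I, one_mul]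
  rfl

lemma tendsto_exp_sub_mcleishProd_sqTruncate {c : ℝ} (hvc : v < c)
    (hmax : Tendsto (fun n => maxAbs (x n) n) atTop (𝓝 0))
    (hsq : Tendsto (fun n => ∑ k ∈ Finset.range n, x n k ^ 2) atTop (𝓝 v)) :
    Tendsto (fun n => Complex.exp (Complex.I * ↑(∑ k ∈ Finset.range n, x n k))
      - mcleishProd (sqTruncate c (x n)) n * ↑(Real.exp (-v / 2))) atTop (𝓝 0) := by
  refine (tendsto_exp_sub_mcleishProd hmax hsq).congr' ?_
  filter_upwards [hsq.eventually_le_const hvc] with n hn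
  rw [mcleishProd_sqTruncate_of_sum_sq_le hn]

end Exponential

/-! ### Convergence of integrals -/

section Convergence

variable {Ω E : Type*} {mΩ : MeasurableSpace Ω} {μ : Measure Ω} [NormedAddCommGroup E]

lemma tendsto_integral_norm_of_le_const_add [IsFiniteMeasure μ] {f : ℕ → Ω → E}
    (hf : ∀ n, AEStronglyMeasurable (f n) μ)
    (hlim : ∀ᵐ ω ∂μ, Tendsto (fun n => f n ω) atTop (𝓝 0))
    (hdom : ∀ ε > 0, ∃ (C : ℝ) (g : ℕ → Ω → ℝ), (∀ n, Integrable (g n) μ) ∧ (∀ n, 0 ≤ᵐ[μ] g n) ∧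
      (∀ᶠ n in atTop, ∫ ω, g n ω ∂μ ≤ ε) ∧ ∀ n, ∀ᵐ ω ∂μ, ‖f n ω‖ ≤ C + g n ω) :
    Tendsto (fun n => ∫ ω, ‖f n ω‖ ∂μ) atTop (𝓝 0) := by
  refine tendsto_order.2 ⟨fun a ha => Eventually.of_forall fun n =>
    ha.trans_le (integral_nonneg fun _ => norm_nonneg _), fun ε hε => ?_⟩
  obtain ⟨C, g, hg, hg0, hgε, hfg⟩ := hdom (ε / 2) (half_pos hε)
  have hmin_meas (n : ℕ) : AEStronglyMeasurable (fun ω => min ‖f n ω‖ |C|) μ :=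
    (hf n).norm.inf aestronglyMeasurable_const
  have hmin_le (n : ℕ) (ω : Ω) : ‖min ‖f n ω‖ |C|‖ ≤ |C| := by
    rw [Real.norm_of_nonneg (le_min (norm_nonneg _) (abs_nonneg C))]
    exact min_le_right _ _
  have hmin_int (n : ℕ) : Integrable (fun ω => min ‖f n ω‖ |C|) μ :=
    Integrable.of_bound (hmin_meas n) |C| (Eventually.of_forall (hmin_le n))
  have hmin : Tendsto (fun n => ∫ ω, min ‖f n ω‖ |C| ∂μ) atTop (𝓝 (∫ _, (0 : ℝ) ∂μ)) := by
    refine tendsto_integral_of_dominated_convergence (fun _ => |C|) hmin_meas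
      (integrable_const _) (fun n => Eventually.of_forall (hmin_le n)) ?_
    filter_upwards [hlim] with ω hω
    simpa using hω.norm.min (tendsto_const_nhds (x := |C|))
  rw [integral_zero] at hmin
  filter_upwards [hgε, hmin.eventually_lt_const (half_pos hε)] with n hgn hmn
  calc ∫ ω, ‖f n ω‖ ∂μ ≤ ∫ ω, (min ‖f n ω‖ |C| + g n ω) ∂μ := by
        refine integral_mono_of_nonneg (Eventually.of_forall fun _ => norm_nonneg _)
          ((hmin_int n).add (hg n)) ?_
        filter_upwards [hfg n, hg0 n] with ω hω hω0
        rw [← min_add_add_right]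
        exact le_min (le_add_of_nonneg_right hω0) (hω.trans (by gcongr; exact le_abs_self C))
    _ = ∫ ω, min ‖f n ω‖ |C| ∂μ + ∫ ω, g n ω ∂μ := integral_add (hmin_int n) (hg n)
    _ < ε := by linarith

lemma tendsto_integral_norm_of_integral_sq_le [IsFiniteMeasure μ] {f : ℕ → Ω → E} {K : ℝ}
    (hf : ∀ n, MemLp (f n) 2 μ) (hK : ∀ n, ∫ ω, ‖f n ω‖ ^ 2 ∂μ ≤ K)
    (hlim : ∀ᵐ ω ∂μ, Tendsto (fun n => f n ω) atTop (𝓝 0)) :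
    Tendsto (fun n => ∫ ω, ‖f n ω‖ ∂μ) atTop (𝓝 0) := by
  have hK0 : 0 ≤ K := (integral_nonneg fun _ => sq_nonneg _).trans (hK 0)
  refine tendsto_integral_norm_of_le_const_add (fun n => (hf n).1) hlim fun ε hε => ?_
  have hR : 0 < (K + 1) / ε := by positivity
  refine ⟨(K + 1) / ε, fun n ω => ‖f n ω‖ ^ 2 / ((K + 1) / ε),
    fun n => ((hf n).integrable_norm_pow two_ne_zero).div_const _,
    fun n => Eventually.of_forall fun ω => by positivity, Eventually.of_forall fun n => ?_,
    fun n => Eventually.of_forall fun ω => ?_⟩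
  · rw [integral_div, div_le_iff₀ hR, mul_div_cancel₀ _ hε.ne']
    exact (hK n).trans (le_add_of_nonneg_right zero_le_one)
  · rw [← sub_le_iff_le_add', le_div_iff₀ hR]
    nlinarith [sq_nonneg (‖f n ω‖ - (K + 1) / ε), norm_nonneg (f n ω)]

lemma tendsto_integral_abs_condExp_sub [IsFiniteMeasure μ] (𝒢 : Filtration ℕ mΩ) (Z : Ω → ℝ) :
    Tendsto (fun n => ∫ ω, |μ[Z|𝒢 n] ω - μ[Z|⨆ n, 𝒢 n] ω| ∂μ) atTop (𝓝 0) := by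
  have h := (ENNReal.tendsto_toReal ENNReal.zero_ne_top).comp
    (tendsto_eLpNorm_condExp (μ := μ) (ℱ := 𝒢) Z)
  refine h.congr fun n => ?_
  rw [Function.comp_apply, eLpNorm_one_eq_lintegral_enorm,
    ← integral_norm_eq_lintegral_enorm (integrable_condExp.sub integrable_condExp).1]
  rfl

variable [NormedSpace ℝ E] [CompleteSpace E]

lemma integral_condExp_smul {m : MeasurableSpace Ω} (hm : m ≤ mΩ) [SigmaFinite (μ.trim hm)]
    {Z : Ω → ℝ} {f : Ω → E} (hZ : Integrable Z μ) (hf : AEStronglyMeasurable[m] f μ)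
    (hZf : Integrable (Z • f) μ) :
    ∫ ω, μ[Z|m] ω • f ω ∂μ = ∫ ω, Z ω • f ω ∂μ :=
  (integral_congr_ae (condExp_smul_of_aestronglyMeasurable_right hZ hZf hf).symm).trans
    (integral_condExp hm)

lemma integral_smul_condExp {m : MeasurableSpace Ω} (hm : m ≤ mΩ) [SigmaFinite (μ.trim hm)]
    {Z : Ω → ℝ} {f : Ω → E} (hZ : AEStronglyMeasurable[m] Z μ) (hf : Integrable f μ)
    (hZf : Integrable (Z • f) μ) :
    ∫ ω, Z ω • μ[f|m] ω ∂μ = ∫ ω, Z ω • f ω ∂μ :=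
  (integral_congr_ae (condExp_smul_of_aestronglyMeasurable_left hZ hZf hf).symm).trans
    (integral_condExp hm)

end Convergence

section WeakLimit

variable {Ω E : Type*} {mΩ : MeasurableSpace Ω} {μ : Measure Ω} [IsFiniteMeasure μ]
  {𝒢 : Filtration ℕ mΩ} [NormedAddCommGroup E] [NormedSpace ℝ E] [CompleteSpace E]
  {M : ℕ → ℕ → Ω → E} {R : ℕ → Ω → ℝ} {Z : Ω → ℝ} {p : E} {B C : ℝ}

lemma tendsto_integral_smul_of_tendsto_integral_norm_sub {f : ℕ → Ω → E}
    (hf : ∀ n, Integrable (f n) μ) (hfp : Tendsto (fun n => ∫ ω, ‖f n ω - p‖ ∂μ) atTop (𝓝 0))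
    (hZ : AEStronglyMeasurable Z μ) (hZC : ∀ᵐ ω ∂μ, |Z ω| ≤ C) :
    Tendsto (fun n => ∫ ω, Z ω • f n ω ∂μ) atTop (𝓝 ((∫ ω, Z ω ∂μ) • p)) := by
  rw [← tendsto_sub_nhds_zero_iff]
  refine squeeze_zero_norm (fun n => ?_) (by simpa only [mul_zero] using hfp.const_mul C)
  have hZi : Integrable Z μ := Integrable.of_bound hZ C hZC
  have hsub : Integrable (fun ω => f n ω - p) μ := (hf n).sub (integrable_const p)
  have hZf : Integrable (fun ω => Z ω • f n ω) μ := (hf n).bdd_smul C hZ hZC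
  rw [← integral_smul_const, ← integral_sub hZf (hZi.smul_const p), ← integral_const_mul]
  refine norm_integral_le_of_norm_le (hsub.norm.const_mul C) ?_
  filter_upwards [hZC] with ω hω
  rw [← smul_sub, norm_smul]
  gcongr
  exact hω

lemma norm_integral_smul_sub_condExp_smul_le (hM : ∀ n, Martingale (M n) 𝒢 μ)
    (hR : ∀ n, Integrable (R n) μ) (hMR : ∀ n, ∀ᵐ ω ∂μ, ‖M n n ω‖ ≤ B + R n ω)
    (hR0 : ∀ n, 0 ≤ R n) (hB : 0 ≤ B)
    (hZ : AEStronglyMeasurable Z μ) (hZC : ∀ᵐ ω ∂μ, |Z ω| ≤ C) (m n : ℕ) :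
    ‖∫ ω, Z ω • M n n ω ∂μ - ∫ ω, μ[Z|𝒢 m] ω • M n n ω ∂μ‖
      ≤ B * (∫ ω, |μ[Z|𝒢 n] ω - μ[Z|⨆ k, 𝒢 k] ω| ∂μ + ∫ ω, |μ[Z|𝒢 m] ω - μ[Z|⨆ k, 𝒢 k] ω| ∂μ)
        + 2 * C * ∫ ω, R n ω ∂μ := by
  have hZi : Integrable Z μ := Integrable.of_bound hZ C hZC
  have hcond (k : ℕ) : ∀ᵐ ω ∂μ, |μ[Z|𝒢 k] ω| ≤ C := ae_bdd_abs_condExp_of_ae_bdd_abs hZC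
  have hprod (k : ℕ) : Integrable (fun ω => μ[Z|𝒢 k] ω • M n n ω) μ :=
    ((hM n).integrable n).bdd_smul C integrable_condExp.1 (hcond k)
  have hdiff (k : ℕ) : Integrable (fun ω => |μ[Z|𝒢 k] ω - μ[Z|⨆ k, 𝒢 k] ω|) μ :=
    (integrable_condExp.sub integrable_condExp).abs
  have hsum : Integrable (fun ω => B * (|μ[Z|𝒢 n] ω - μ[Z|⨆ k, 𝒢 k] ω|
      + |μ[Z|𝒢 m] ω - μ[Z|⨆ k, 𝒢 k] ω|)) μ := ((hdiff n).add (hdiff m)).const_mul B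
  have hrem : Integrable (fun ω => 2 * C * R n ω) μ := (hR n).const_mul (2 * C)
  rw [← integral_condExp_smul (𝒢.le n) hZi ((hM n).stronglyMeasurable n).aestronglyMeasurable
    (((hM n).integrable n).bdd_smul C hZ hZC), ← integral_sub (hprod n) (hprod m),
    ← integral_add (hdiff n) (hdiff m), ← integral_const_mul, ← integral_const_mul,
    ← integral_add hsum hrem]
  refine norm_integral_le_of_norm_le (hsum.add hrem) ?_
  filter_upwards [hMR n, hcond n, hcond m] with ω hMω hnω hmω
  have hR0ω : 0 ≤ R n ω := hR0 n ω
  rw [← sub_smul, norm_smul, Real.norm_eq_abs]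
  calc |μ[Z|𝒢 n] ω - μ[Z|𝒢 m] ω| * ‖M n n ω‖
      ≤ |μ[Z|𝒢 n] ω - μ[Z|𝒢 m] ω| * (B + R n ω) := by gcongr
    _ = B * |μ[Z|𝒢 n] ω - μ[Z|𝒢 m] ω| + |μ[Z|𝒢 n] ω - μ[Z|𝒢 m] ω| * R n ω := by ring
    _ ≤ B * (|μ[Z|𝒢 n] ω - μ[Z|⨆ k, 𝒢 k] ω| + |μ[Z|𝒢 m] ω - μ[Z|⨆ k, 𝒢 k] ω|)
        + 2 * C * R n ω := by
      gcongr
      · rw [abs_sub_comm (μ[Z|𝒢 m] ω)]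
        exact abs_sub_le _ _ _
      · exact (abs_sub _ _).trans (by linarith)

-- `Z` is first replaced by `μ[Z|𝒢 m]`: against that weight `M n n` may be exchanged for `M n m`.
theorem tendsto_integral_smul_martingale (hM : ∀ n, Martingale (M n) 𝒢 μ)
    (hR : ∀ n, Integrable (R n) μ) (hRlim : Tendsto (fun n => ∫ ω, R n ω ∂μ) atTop (𝓝 0))
    (hR0 : ∀ n, 0 ≤ R n) (hB : 0 ≤ B) (hMR : ∀ n, ∀ᵐ ω ∂μ, ‖M n n ω‖ ≤ B + R n ω)
    (hMp : ∀ m, Tendsto (fun n => ∫ ω, ‖M n m ω - p‖ ∂μ) atTop (𝓝 0))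
    (hZ : AEStronglyMeasurable Z μ) (hZC : ∀ᵐ ω ∂μ, |Z ω| ≤ C) :
    Tendsto (fun n => ∫ ω, Z ω • M n n ω ∂μ) atTop (𝓝 ((∫ ω, Z ω ∂μ) • p)) := by
  have hcond (m : ℕ) : ∀ᵐ ω ∂μ, |μ[Z|𝒢 m] ω| ≤ C := ae_bdd_abs_condExp_of_ae_bdd_abs hZC
  have hfixed (m : ℕ) : Tendsto (fun n => ∫ ω, μ[Z|𝒢 m] ω • M n n ω ∂μ) atTop
      (𝓝 ((∫ ω, Z ω ∂μ) • p)) := by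
    rw [← integral_condExp (𝒢.le m)]
    refine (tendsto_integral_smul_of_tendsto_integral_norm_sub (fun n => (hM n).integrable m)
      (hMp m) integrable_condExp.1 (hcond m)).congr' ?_
    filter_upwards [eventually_ge_atTop m] with n hmn
    rw [← integral_smul_condExp (𝒢.le m) stronglyMeasurable_condExp.aestronglyMeasurable
      ((hM n).integrable n) (((hM n).integrable n).bdd_smul C integrable_condExp.1 (hcond m))]
    refine integral_congr_ae ?_
    filter_upwards [(hM n).condExp_ae_eq hmn] with ω hω
    rw [hω]
  refine TendstoUniformlyOnFilter.tendsto_of_eventually_tendsto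
    (F := fun m n => ∫ ω, μ[Z|𝒢 m] ω • M n n ω ∂μ) (p := atTop) ?_
    (Eventually.of_forall hfixed) tendsto_const_nhds
  have hlevy := tendsto_integral_abs_condExp_sub (μ := μ) 𝒢 Z
  have hbound := (((hlevy.comp tendsto_snd).add (hlevy.comp tendsto_fst)).const_mul B).add
    ((hRlim.comp (tendsto_snd (f := atTop (α := ℕ)))).const_mul (2 * C))
  rw [add_zero, mul_zero, mul_zero, add_zero] at hbound
  refine Metric.tendstoUniformlyOnFilter_iff.2 fun ε hε => ?_
  filter_upwards [hbound.eventually_lt_const hε] with ⟨m, n⟩ hmn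
  rw [dist_eq_norm]
  exact (norm_integral_smul_sub_condExp_smul_le hM hR hMR hR0 hB hZ hZC m n).trans_lt hmn

end WeakLimit

/-! ### Martingale differences -/

/-- A martingale difference sequence for `𝒢`. The term `d k` is the increment from time `k` to time
`k + 1`: it is `𝒢 (k + 1)`-measurable and has vanishing conditional expectation given `𝒢 k`. -/
structure IsMartingaleDiff {Ω : Type*} {mΩ : MeasurableSpace Ω} (d : ℕ → Ω → ℝ)
    (𝒢 : Filtration ℕ mΩ) (μ : Measure Ω) : Prop where
  stronglyMeasurable : ∀ k, StronglyMeasurable[𝒢 (k + 1)] (d k)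
  integrable : ∀ k, Integrable (d k) μ
  condExp_ae_eq_zero : ∀ k, μ[d k|𝒢 k] =ᵐ[μ] 0

namespace IsMartingaleDiff

variable {Ω E : Type*} {mΩ : MeasurableSpace Ω} {μ : Measure Ω} {𝒢 : Filtration ℕ mΩ}
  {d : ℕ → Ω → ℝ}

lemma const_mul (hd : IsMartingaleDiff d 𝒢 μ) (c : ℝ) :
    IsMartingaleDiff (fun k ω => c * d k ω) 𝒢 μ where
  stronglyMeasurable k := (hd.stronglyMeasurable k).const_mul c
  integrable k := (hd.integrable k).const_mul c
  condExp_ae_eq_zero k := by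
    refine (condExp_smul c (d k) (𝒢 k)).trans ?_
    filter_upwards [hd.condExp_ae_eq_zero k] with ω hω
    rw [Pi.smul_apply, hω, Pi.zero_apply, smul_zero]

lemma stronglyMeasurable_of_lt (hd : IsMartingaleDiff d 𝒢 μ) {k n : ℕ} (hkn : k < n) :
    StronglyMeasurable[𝒢 n] (d k) :=
  (hd.stronglyMeasurable k).mono (𝒢.mono hkn)

lemma stronglyMeasurable_sum (hd : IsMartingaleDiff d 𝒢 μ) (n : ℕ) :
    StronglyMeasurable[𝒢 n] fun ω => ∑ k ∈ Finset.range n, d k ω :=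
  Finset.stronglyMeasurable_fun_sum _ fun _ hk =>
    hd.stronglyMeasurable_of_lt (Finset.mem_range.1 hk)

lemma stronglyMeasurable_sum_sq (hd : IsMartingaleDiff d 𝒢 μ) (n : ℕ) :
    StronglyMeasurable[𝒢 n] fun ω => ∑ k ∈ Finset.range n, d k ω ^ 2 :=
  Finset.stronglyMeasurable_fun_sum _ fun _ hk =>
    (hd.stronglyMeasurable_of_lt (Finset.mem_range.1 hk)).pow 2

lemma stronglyMeasurable_mcleishProd (hd : IsMartingaleDiff d 𝒢 μ) (n : ℕ) :
    StronglyMeasurable[𝒢 n] fun ω => mcleishProd (d · ω) n :=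
  Finset.stronglyMeasurable_fun_prod _ fun _ hk => stronglyMeasurable_const.add <|
    (Complex.continuous_ofReal.comp_stronglyMeasurable
      (hd.stronglyMeasurable_of_lt (Finset.mem_range.1 hk))).const_mul Complex.I

lemma measurable_maxAbs (hd : IsMartingaleDiff d 𝒢 μ) (n : ℕ) :
    Measurable fun ω => maxAbs (d · ω) n := by
  refine measurable_coe_nnreal_real.comp ?_
  induction n with
  | zero => simp only [Finset.range_zero, Finset.sup_empty, measurable_const]
  | succ n ih =>
    simp only [Finset.range_add_one, Finset.sup_insert]
    exact (((hd.stronglyMeasurable n).mono (𝒢.le _)).measurable.nnnorm).sup ih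

lemma integrable_maxAbs (hd : IsMartingaleDiff d 𝒢 μ) (n : ℕ) :
    Integrable (fun ω => maxAbs (d · ω) n) μ := by
  refine (integrable_finsetSum (Finset.range n) fun k _ => (hd.integrable k).abs).mono'
    (hd.measurable_maxAbs n).aestronglyMeasurable (Eventually.of_forall fun ω => ?_)
  rw [Real.norm_of_nonneg (maxAbs_nonneg _ _)]
  exact maxAbs_le_sum_abs _ n

lemma comp_sqTruncate (hd : IsMartingaleDiff d 𝒢 μ) (c : ℝ) :
    IsMartingaleDiff (fun k ω => sqTruncate c (d · ω) k) 𝒢 μ := by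
  have hset (k : ℕ) : MeasurableSet[𝒢 k] {ω | ∑ j ∈ Finset.range k, d j ω ^ 2 ≤ c} :=
    (hd.stronglyMeasurable_sum_sq k).measurable measurableSet_Iic
  have heq (k : ℕ) : (fun ω => sqTruncate c (d · ω) k)
      = {ω | ∑ j ∈ Finset.range k, d j ω ^ 2 ≤ c}.indicator (d k) := rfl
  refine ⟨fun k => ?_, fun k => ?_, fun k => ?_⟩
  · exact heq k ▸ (hd.stronglyMeasurable k).indicator (𝒢.mono k.le_succ _ (hset k))
  · exact heq k ▸ (hd.integrable k).indicator (𝒢.le k _ (hset k))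
  · refine heq k ▸ (condExp_indicator (hd.integrable k) (hset k)).trans ?_
    filter_upwards [hd.condExp_ae_eq_zero k] with ω hω
    exact Set.indicator_apply_eq_zero.2 fun _ => hω

lemma condExp_smul_ae_eq_zero [NormedAddCommGroup E] [NormedSpace ℝ E] [CompleteSpace E]
    (hd : IsMartingaleDiff d 𝒢 μ) {k : ℕ} {f : Ω → E} (hf : StronglyMeasurable[𝒢 k] f)
    (hdf : Integrable (d k • f) μ) : μ[d k • f|𝒢 k] =ᵐ[μ] 0 := by
  refine (condExp_smul_of_aestronglyMeasurable_right (hd.integrable k) hdf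
    hf.aestronglyMeasurable).trans ?_
  filter_upwards [hd.condExp_ae_eq_zero k] with ω hω
  rw [Pi.smul_apply', hω, Pi.zero_apply, zero_smul, Pi.zero_apply]

variable [IsFiniteMeasure μ]

lemma integral_sq_sum (hd : IsMartingaleDiff d 𝒢 μ) (hL2 : ∀ k, MemLp (d k) 2 μ) (n : ℕ) :
    ∫ ω, (∑ k ∈ Finset.range n, d k ω) ^ 2 ∂μ = ∑ k ∈ Finset.range n, ∫ ω, d k ω ^ 2 ∂μ := by
  induction n with
  | zero => simp only [Finset.range_zero, Finset.sum_empty, zero_pow two_ne_zero, integral_zero]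
  | succ n ih =>
    have hS : MemLp (fun ω => ∑ k ∈ Finset.range n, d k ω) 2 μ :=
      memLp_finsetSum _ fun k _ => hL2 k
    have hcross : Integrable (fun ω => d n ω * ∑ k ∈ Finset.range n, d k ω) μ :=
      (hL2 n).integrable_mul hS
    have hsq : Integrable (fun ω => (∑ k ∈ Finset.range n, d k ω) ^ 2 + d n ω ^ 2) μ :=
      hS.integrable_sq.add (hL2 n).integrable_sq
    have horth : ∫ ω, d n ω * ∑ k ∈ Finset.range n, d k ω ∂μ = 0 :=
      (integral_condExp (𝒢.le n)).symm.trans <|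
        (integral_congr_ae (hd.condExp_smul_ae_eq_zero (hd.stronglyMeasurable_sum n) hcross)).trans
          (integral_zero Ω ℝ)
    calc ∫ ω, (∑ k ∈ Finset.range (n + 1), d k ω) ^ 2 ∂μ
        = ∫ ω, (∑ k ∈ Finset.range n, d k ω) ^ 2 + d n ω ^ 2
            + 2 * (d n ω * ∑ k ∈ Finset.range n, d k ω) ∂μ := by
          congr with ω
          rw [Finset.sum_range_succ]
          ring
      _ = ∫ ω, (∑ k ∈ Finset.range n, d k ω) ^ 2 ∂μ + ∫ ω, d n ω ^ 2 ∂μ := by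
          rw [integral_add hsq (hcross.const_mul 2), integral_const_mul, horth, mul_zero, add_zero,
            integral_add hS.integrable_sq (hL2 n).integrable_sq]
      _ = ∑ k ∈ Finset.range (n + 1), ∫ ω, d k ω ^ 2 ∂μ := by rw [ih, Finset.sum_range_succ]

theorem martingale_mcleishProd (hd : IsMartingaleDiff d 𝒢 μ)
    (hint : ∀ n, Integrable (fun ω => mcleishProd (d · ω) n) μ) :
    Martingale (fun n ω => mcleishProd (d · ω) n) 𝒢 μ := by
  refine martingale_nat hd.stronglyMeasurable_mcleishProd hint fun n => ?_
  have hsucc : (fun ω => mcleishProd (d · ω) (n + 1))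
      = (fun ω => mcleishProd (d · ω) n)
        + d n • fun ω => Complex.I * mcleishProd (d · ω) n :=
    funext fun ω => mcleishProd_succ (d · ω) n
  have hincr : Integrable (d n • fun ω => Complex.I * mcleishProd (d · ω) n) μ := by
    simpa only [hsucc, add_sub_cancel_left] using (hint (n + 1)).sub (hint n)
  rw [hsucc]
  filter_upwards [condExp_add (hint n) hincr (𝒢 n), hd.condExp_smul_ae_eq_zero
    ((hd.stronglyMeasurable_mcleishProd n).const_mul Complex.I) hincr] with ω hadd hzero
  rw [hadd, Pi.add_apply, hzero, Pi.zero_apply, add_zero,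
    condExp_of_stronglyMeasurable (𝒢.le n) (hd.stronglyMeasurable_mcleishProd n) (hint n)]

theorem martingale_mcleishProd_sqTruncate (hd : IsMartingaleDiff d 𝒢 μ) {c : ℝ} (hc : 0 ≤ c) :
    Martingale (fun n ω => mcleishProd (sqTruncate c (d · ω)) n) 𝒢 μ := by
  refine (hd.comp_sqTruncate c).martingale_mcleishProd fun n => ?_
  refine (((integrable_const 1).add (hd.integrable_maxAbs n)).const_mul (Real.exp (c / 2))).mono'
    (((hd.comp_sqTruncate c).stronglyMeasurable_mcleishProd n).mono (𝒢.le n)).aestronglyMeasurable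
    (Eventually.of_forall fun ω => norm_mcleishProd_sqTruncate_le hc (d · ω) n)

end IsMartingaleDiff

/-! ### Stable convergence and characteristic functions -/

section Stable

variable {Ω : Type*} {mΩ : MeasurableSpace Ω} {μ : Measure Ω} {W : ℕ → Ω → ℝ} {V V' : Ω → ℝ}

lemma tendsto_integral_of_tendsto_integral_charFun [IsProbabilityMeasure μ] (κ : Kernel Ω ℝ)
    [IsMarkovKernel κ] (hW : ∀ n, AEMeasurable (W n) μ)
    (h : ∀ t : ℝ, Tendsto (fun n => ∫ ω, Complex.exp (t * W n ω * Complex.I) ∂μ) atTop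
      (𝓝 (∫ ω, charFun (κ ω) t ∂μ))) (g : BoundedContinuousFunction ℝ ℝ) :
    Tendsto (fun n => ∫ ω, g (W n ω) ∂μ) atTop (𝓝 (∫ ω, ∫ x, g x ∂κ ω ∂μ)) := by
  let law (n : ℕ) : ProbabilityMeasure ℝ :=
    ⟨μ.map (W n), Measure.isProbabilityMeasure_map (hW n)⟩
  let mixture : ProbabilityMeasure ℝ :=
    ⟨(μ ⊗ₘ κ).map Prod.snd, Measure.isProbabilityMeasure_map measurable_snd.aemeasurable⟩
  have hmixture {E : Type} [NormedAddCommGroup E] [NormedSpace ℝ E] [CompleteSpace E]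
      [SecondCountableTopology E] {φ : ℝ → E} (hφ : Continuous φ) {B : ℝ} (hB : ∀ x, ‖φ x‖ ≤ B) :
      ∫ x, φ x ∂(mixture : Measure ℝ) = ∫ ω, ∫ x, φ x ∂κ ω ∂μ := by
    rw [ProbabilityMeasure.coe_mk, integral_map measurable_snd.aemeasurable
      hφ.aestronglyMeasurable, Measure.integral_compProd]
    exact Integrable.of_bound (hφ.aestronglyMeasurable.comp_measurable measurable_snd) B
      (Eventually.of_forall fun p => hB p.2)
  have hlaw (n : ℕ) {E : Type} [NormedAddCommGroup E] [NormedSpace ℝ E] [SecondCountableTopology E]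
      {φ : ℝ → E} (hφ : Continuous φ) :
      ∫ x, φ x ∂(law n : Measure ℝ) = ∫ ω, φ (W n ω) ∂μ :=
    integral_map (hW n) hφ.aestronglyMeasurable
  have htendsto : Tendsto law atTop (𝓝 mixture) := by
    refine ProbabilityMeasure.tendsto_iff_tendsto_charFun.2 fun t => ?_
    simp only [charFun_apply_real] at h ⊢
    rw [hmixture (by fun_prop) (B := 1)]
    · simpa only [hlaw _ (show Continuous fun x : ℝ => Complex.exp (t * x * Complex.I) by fun_prop)]
        using h t
    · intro x
      rw [← Complex.ofReal_mul, Complex.norm_exp_ofReal_mul_I]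
  have hg := ProbabilityMeasure.tendsto_iff_forall_integral_tendsto.1 htendsto g
  rw [hmixture g.continuous g.norm_coe_le_norm] at hg
  simpa only [hlaw _ g.continuous] using hg

lemma StableGaussLimit.congr_ae (hVV' : V =ᵐ[μ] V') (h : StableGaussLimit μ W V) :
    StableGaussLimit μ W V' := by
  intro H hH hH0 g
  have hcongr : V =ᵐ[μ[|H]] V' := cond_absolutelyContinuous.ae_le hVV'
  refine (h H hH hH0 g).trans (le_of_eq ?_)
  congr 1
  refine integral_congr_ae ?_
  filter_upwards [hcongr] with ω hω
  rw [hω]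

theorem stableGaussLimit_of_tendsto_setIntegral [IsFiniteMeasure μ]
    (hW : ∀ n, AEMeasurable (W n) μ) (hV : Measurable V) (hV0 : ∀ᵐ ω ∂μ, 0 ≤ V ω)
    (h : ∀ (t : ℝ) (H : Set Ω), MeasurableSet H →
      Tendsto (fun n => ∫ ω in H, Complex.exp (Complex.I * ↑(t * W n ω)) ∂μ) atTop
        (𝓝 ↑(∫ ω in H, Real.exp (-(t ^ 2 * V ω) / 2) ∂μ))) :
    StableGaussLimit μ W V := by
  intro H hH hH0 g
  have : IsProbabilityMeasure μ[|H] := cond_isProbabilityMeasure hH0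
  have hcond : μ[|H] ≪ μ := cond_absolutelyContinuous
  let κ : Kernel Ω ℝ := ⟨fun ω => gaussianReal 0 (V ω).toNNReal,
    measurable_gaussianReal.comp (measurable_const.prodMk hV.real_toNNReal)⟩
  have : IsMarkovKernel κ := ⟨fun ω => inferInstanceAs
    (IsProbabilityMeasure (gaussianReal 0 (V ω).toNNReal))⟩
  refine tendsto_integral_of_tendsto_integral_charFun κ (fun n => (hW n).mono_ac hcond)
    (fun t => ?_) g
  have hcharFun : ∀ᵐ ω ∂μ[|H], charFun (κ ω) t = ↑(Real.exp (-(t ^ 2 * V ω) / 2)) := by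
    filter_upwards [hcond.ae_le hV0] with ω hω
    refine (charFun_gaussianReal t).trans ?_
    rw [Real.coe_toNNReal _ hω]
    push_cast
    ring_nf
  rw [integral_congr_ae hcharFun]
  simp only [ProbabilityTheory.cond, integral_smul_measure]
  rw [integral_complex_ofReal]
  refine ((h t H hH).const_smul _).congr fun n => ?_
  simp only [Complex.ofReal_mul, mul_comm Complex.I]

end Stable

/-! ### McLeish's theorem for martingale difference arrays -/

lemma tendsto_setIntegral_of_forall_inter {Ω E : Type*} {mΩ : MeasurableSpace Ω} {μ : Measure Ω}
    [IsFiniteMeasure μ] [NormedAddCommGroup E] [NormedSpace ℝ E] {F : ℕ → Ω → E} {f : Ω → E} {B : ℝ}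
    {H : Set Ω} {s : ℕ → Set Ω} (hF : ∀ n, AEStronglyMeasurable (F n) μ)
    (hFB : ∀ n, ∀ᵐ ω ∂μ, ‖F n ω‖ ≤ B) (hf : Integrable f μ) (hH : MeasurableSet H)
    (hs : ∀ N, MeasurableSet (s N)) (hmono : Monotone s) (hunion : ⋃ N, s N = Set.univ)
    (h : ∀ N, Tendsto (fun n => ∫ ω in H ∩ s N, F n ω ∂μ) atTop (𝓝 (∫ ω in H ∩ s N, f ω ∂μ))) :
    Tendsto (fun n => ∫ ω in H, F n ω ∂μ) atTop (𝓝 (∫ ω in H, f ω ∂μ)) := by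
  have hlim : Tendsto (fun N => ∫ ω in H ∩ s N, f ω ∂μ) atTop (𝓝 (∫ ω in H, f ω ∂μ)) := by
    have hH_union : ⋃ N, H ∩ s N = H := by rw [← Set.inter_iUnion, hunion, Set.inter_univ]
    simpa only [hH_union] using tendsto_setIntegral_of_monotone (fun N => hH.inter (hs N))
      (fun _ _ hMN => Set.inter_subset_inter_right H (hmono hMN)) hf.integrableOn
  have htail : Tendsto (fun N => |B| * μ.real (s N)ᶜ) atTop (𝓝 0) := by
    have hcompl := tendsto_measure_iInter_atTop (μ := μ)
      (fun N => (hs N).compl.nullMeasurableSet)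
      (fun _ _ hMN => Set.compl_subset_compl.2 (hmono hMN)) ⟨0, measure_ne_top μ _⟩
    rw [← Set.compl_iUnion, hunion, Set.compl_univ, measure_empty] at hcompl
    have hreal : Tendsto (fun N => μ.real (s N)ᶜ) atTop (𝓝 0) :=
      (ENNReal.tendsto_toReal ENNReal.zero_ne_top).comp hcompl
    simpa only [mul_zero] using hreal.const_mul |B|
  refine TendstoUniformly.tendsto_of_eventually_tendsto (p := atTop)
    (F := fun N n => ∫ ω in H ∩ s N, F n ω ∂μ) (Metric.tendstoUniformly_iff.2 fun ε hε => ?_)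
    (Eventually.of_forall h) hlim
  filter_upwards [htail.eventually_lt_const hε] with N hN n
  have hint : Integrable (F n) μ := Integrable.of_bound (hF n) B (hFB n)
  rw [dist_eq_norm, ← integral_inter_add_sdiff (s := H) (hs N) hint.integrableOn,
    add_sub_cancel_left]
  refine lt_of_le_of_lt ?_ hN
  refine (norm_setIntegral_le_of_norm_le_const_ae (C := |B|) (measure_lt_top μ _) ?_).trans ?_
  · exact ae_restrict_of_ae ((hFB n).mono fun ω hω => hω.trans (le_abs_self B))
  · exact mul_le_mul_of_nonneg_left (measureReal_mono fun ω hω => hω.2) (abs_nonneg B)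

lemma tendsto_integral_smul_mcleishProd_sqTruncate {Ω : Type*} {mΩ : MeasurableSpace Ω}
    {μ : Measure Ω} [IsFiniteMeasure μ] {𝒢 : Filtration ℕ mΩ} {Y : ℕ → ℕ → Ω → ℝ} {Z : Ω → ℝ}
    {c C : ℝ} (hY : ∀ n, IsMartingaleDiff (Y n) 𝒢 μ)
    (hmaxL1 : Tendsto (fun n => ∫ ω, maxAbs (Y n · ω) n ∂μ) atTop (𝓝 0)) (hc : 0 ≤ c)
    (hZ : AEStronglyMeasurable Z μ) (hZC : ∀ᵐ ω ∂μ, |Z ω| ≤ C) :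
    Tendsto (fun n => ∫ ω, Z ω • mcleishProd (sqTruncate c (Y n · ω)) n ∂μ) atTop
      (𝓝 ((∫ ω, Z ω ∂μ) • (1 : ℂ))) := by
  refine tendsto_integral_smul_martingale (B := Real.exp (c / 2))
    (R := fun n ω => Real.exp (c / 2) * maxAbs (Y n · ω) n)
    (M := fun n m ω => mcleishProd (sqTruncate c (Y n · ω)) m)
    (fun n => (hY n).martingale_mcleishProd_sqTruncate hc)
    (fun n => ((hY n).integrable_maxAbs n).const_mul _) ?_
    (fun n ω => mul_nonneg (Real.exp_pos _).le (maxAbs_nonneg _ _)) (Real.exp_pos _).le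
    (fun n => Eventually.of_forall fun ω => ?_) (fun m => ?_) hZ hZC
  · simpa only [integral_const_mul, mul_zero] using hmaxL1.const_mul (Real.exp (c / 2))
  · exact (norm_mcleishProd_sqTruncate_le hc (Y n · ω) n).trans_eq (by ring)
  · have hbound := hmaxL1.const_mul (m * Real.exp (c / 2))
    rw [mul_zero] at hbound
    refine squeeze_zero' (Eventually.of_forall fun n => integral_nonneg fun _ => norm_nonneg _) ?_
      hbound
    filter_upwards [eventually_ge_atTop m] with n hmn
    rw [← integral_const_mul]
    exact integral_mono_of_nonneg (Eventually.of_forall fun _ => norm_nonneg _)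
      (((hY n).integrable_maxAbs n).const_mul _)
      (Eventually.of_forall fun ω => norm_mcleishProd_sqTruncate_sub_one_le c (Y n · ω) hmn)

/-- A martingale difference array, with nested filtrations all equal to `𝒢`, that satisfies the
conditions of McLeish's central limit theorem: the row maxima vanish almost everywhere and in `L¹`,
and the row sums of squares converge to `V`. -/
structure IsMcLeishArray {Ω : Type*} {mΩ : MeasurableSpace Ω} (Y : ℕ → ℕ → Ω → ℝ) (V : Ω → ℝ)
    (𝒢 : Filtration ℕ mΩ) (μ : Measure Ω) : Prop where
  isMartingaleDiff : ∀ n, IsMartingaleDiff (Y n) 𝒢 μ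
  tendsto_integral_maxAbs : Tendsto (fun n => ∫ ω, maxAbs (Y n · ω) n ∂μ) atTop (𝓝 0)
  tendsto_maxAbs : ∀ᵐ ω ∂μ, Tendsto (fun n => maxAbs (Y n · ω) n) atTop (𝓝 0)
  tendsto_sum_sq : ∀ᵐ ω ∂μ,
    Tendsto (fun n => ∑ k ∈ Finset.range n, Y n k ω ^ 2) atTop (𝓝 (V ω))

namespace IsMcLeishArray

variable {Ω : Type*} {mΩ : MeasurableSpace Ω} {μ : Measure Ω}
  {𝒢 : Filtration ℕ mΩ} {Y : ℕ → ℕ → Ω → ℝ} {V : Ω → ℝ} {c : ℝ}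

lemma ae_nonneg (hY : IsMcLeishArray Y V 𝒢 μ) : ∀ᵐ ω ∂μ, 0 ≤ V ω :=
  hY.tendsto_sum_sq.mono fun _ hω =>
    ge_of_tendsto' hω fun _ => Finset.sum_nonneg fun _ _ => sq_nonneg _

lemma norm_exp_neg_div_two_le_one (hY : IsMcLeishArray Y V 𝒢 μ) :
    ∀ᵐ ω ∂μ, ‖Real.exp (-V ω / 2)‖ ≤ 1 := by
  filter_upwards [hY.ae_nonneg] with ω hω
  rw [Real.norm_of_nonneg (Real.exp_pos _).le]
  exact Real.exp_le_one_iff.2 (by linarith)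

lemma const_mul (hY : IsMcLeishArray Y V 𝒢 μ) (t : ℝ) :
    IsMcLeishArray (fun n k ω => t * Y n k ω) (fun ω => t ^ 2 * V ω) 𝒢 μ where
  isMartingaleDiff n := (hY.isMartingaleDiff n).const_mul t
  tendsto_integral_maxAbs := by
    simpa only [maxAbs_const_mul, integral_const_mul, mul_zero] using
      hY.tendsto_integral_maxAbs.const_mul |t|
  tendsto_maxAbs := hY.tendsto_maxAbs.mono fun ω hω => by
    simpa only [maxAbs_const_mul, mul_zero] using hω.const_mul |t|
  tendsto_sum_sq := hY.tendsto_sum_sq.mono fun ω hω => by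
    simpa only [mul_pow, ← Finset.mul_sum] using hω.const_mul (t ^ 2)

lemma congr_ae {V' : Ω → ℝ} (hY : IsMcLeishArray Y V 𝒢 μ) (hVV' : V =ᵐ[μ] V') :
    IsMcLeishArray Y V' 𝒢 μ where
  __ := hY
  tendsto_sum_sq := by
    filter_upwards [hY.tendsto_sum_sq, hVV'] with ω hω hVω
    rwa [← hVω]

variable [IsFiniteMeasure μ]

lemma integrable_exp_sum (hY : IsMcLeishArray Y V 𝒢 μ) (n : ℕ) :
    Integrable (fun ω => Complex.exp (Complex.I * ↑(∑ k ∈ Finset.range n, Y n k ω))) μ := by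
  have hsum := ((hY.isMartingaleDiff n).stronglyMeasurable_sum n).mono (𝒢.le n)
  refine Integrable.of_bound (Complex.continuous_exp.comp_stronglyMeasurable <|
    (Complex.continuous_ofReal.comp_stronglyMeasurable hsum).const_mul
      Complex.I).aestronglyMeasurable 1 (Eventually.of_forall fun ω => ?_)
  rw [mul_comm, Complex.norm_exp_ofReal_mul_I]

lemma integrable_exp_neg_smul_mcleishProd (hY : IsMcLeishArray Y V 𝒢 μ) (hV : Measurable V)
    (hc : 0 ≤ c) (n : ℕ) :
    Integrable (fun ω => Real.exp (-V ω / 2) • mcleishProd (sqTruncate c (Y n · ω)) n) μ :=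
  (((hY.isMartingaleDiff n).martingale_mcleishProd_sqTruncate hc).integrable n).bdd_smul 1
    (hV.neg.div_const 2).exp.aestronglyMeasurable hY.norm_exp_neg_div_two_le_one

lemma tendsto_setIntegral_norm_exp_sum_sub {G : Set Ω} (hY : IsMcLeishArray Y V 𝒢 μ)
    (hV : Measurable V) (hc : 0 ≤ c) (hG : MeasurableSet G) (hGc : ∀ ω ∈ G, V ω < c) :
    Tendsto (fun n => ∫ ω in G, ‖Complex.exp (Complex.I * ↑(∑ k ∈ Finset.range n, Y n k ω))
      - Real.exp (-V ω / 2) • mcleishProd (sqTruncate c (Y n · ω)) n‖ ∂μ) atTop (𝓝 0) := by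
  refine tendsto_integral_norm_of_le_const_add (fun n => ((hY.integrable_exp_sum n).sub
    (hY.integrable_exp_neg_smul_mcleishProd hV hc n)).1.restrict) ?_ fun ε hε =>
    ⟨1 + Real.exp (c / 2), fun n ω => Real.exp (c / 2) * maxAbs (Y n · ω) n,
      fun n => (((hY.isMartingaleDiff n).integrable_maxAbs n).const_mul _).integrableOn,
      fun n => Eventually.of_forall fun ω => mul_nonneg (Real.exp_pos _).le (maxAbs_nonneg _ _),
      ?_, fun n => ?_⟩
  · filter_upwards [ae_restrict_mem hG, ae_restrict_of_ae hY.tendsto_maxAbs,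
      ae_restrict_of_ae hY.tendsto_sum_sq] with ω hω hmaxω hsqω
    refine (tendsto_exp_sub_mcleishProd_sqTruncate (hGc ω hω) hmaxω hsqω).congr fun n => ?_
    rw [Complex.real_smul, mul_comm (mcleishProd _ _)]
  · have hbound := hY.tendsto_integral_maxAbs.const_mul (Real.exp (c / 2))
    rw [mul_zero] at hbound
    filter_upwards [hbound.eventually_le_const hε] with n hn
    refine (setIntegral_le_integral
      (((hY.isMartingaleDiff n).integrable_maxAbs n).const_mul _) ?_).trans ?_
    · exact Eventually.of_forall fun ω => mul_nonneg (Real.exp_pos _).le (maxAbs_nonneg _ _)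
    · rwa [integral_const_mul]
  · filter_upwards [ae_restrict_of_ae hY.norm_exp_neg_div_two_le_one] with ω hω
    refine (norm_sub_le _ _).trans ?_
    rw [mul_comm Complex.I, Complex.norm_exp_ofReal_mul_I, norm_smul]
    calc 1 + ‖Real.exp (-V ω / 2)‖ * ‖mcleishProd (sqTruncate c (Y n · ω)) n‖
        ≤ 1 + 1 * (Real.exp (c / 2) * (1 + maxAbs (Y n · ω) n)) := by
          gcongr
          exact norm_mcleishProd_sqTruncate_le hc _ n
      _ = 1 + Real.exp (c / 2) + Real.exp (c / 2) * maxAbs (Y n · ω) n := by ring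

lemma tendsto_setIntegral_exp_sum_of_lt {G : Set Ω} (hY : IsMcLeishArray Y V 𝒢 μ)
    (hV : Measurable V) (hc : 0 ≤ c) (hG : MeasurableSet G) (hGc : ∀ ω ∈ G, V ω < c) :
    Tendsto (fun n => ∫ ω in G, Complex.exp (Complex.I * ↑(∑ k ∈ Finset.range n, Y n k ω)) ∂μ)
      atTop (𝓝 ↑(∫ ω in G, Real.exp (-V ω / 2) ∂μ)) := by
  set P : ℕ → Ω → ℂ := fun n ω => mcleishProd (sqTruncate c (Y n · ω)) n
  set U : Ω → ℝ := fun ω => Real.exp (-V ω / 2)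
  have hU : AEStronglyMeasurable U μ := (hV.neg.div_const 2).exp.aestronglyMeasurable
  have hweak : Tendsto (fun n => ∫ ω in G, U ω • P n ω ∂μ) atTop (𝓝 ↑(∫ ω in G, U ω ∂μ)) := by
    have hind := tendsto_integral_smul_mcleishProd_sqTruncate (Z := G.indicator U)
      hY.isMartingaleDiff hY.tendsto_integral_maxAbs hc (hU.indicator hG)
      (hY.norm_exp_neg_div_two_le_one.mono fun ω hω => (norm_indicator_le_norm_self U ω).trans hω)
    rw [integral_indicator hG, Complex.real_smul, mul_one] at hind
    refine hind.congr fun n => ?_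
    rw [← integral_indicator hG]
    exact integral_congr_ae (Eventually.of_forall fun ω =>
      (Set.indicator_smul_apply_left G U (P n) ω).symm)
  have hdiff : Tendsto (fun n => ∫ ω in G,
      (Complex.exp (Complex.I * ↑(∑ k ∈ Finset.range n, Y n k ω)) - U ω • P n ω) ∂μ) atTop (𝓝 0) :=
    squeeze_zero_norm (fun n => norm_integral_le_integral_norm _)
      (hY.tendsto_setIntegral_norm_exp_sum_sub hV hc hG hGc)
  have hadd := hdiff.add hweak
  rw [zero_add] at hadd
  refine hadd.congr fun n => ?_
  rw [integral_sub (hY.integrable_exp_sum n).integrableOn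
    (hY.integrable_exp_neg_smul_mcleishProd hV hc n).integrableOn, sub_add_cancel]

theorem tendsto_setIntegral_exp_sum {H : Set Ω} (hY : IsMcLeishArray Y V 𝒢 μ) (hV : Measurable V)
    (hH : MeasurableSet H) :
    Tendsto (fun n => ∫ ω in H, Complex.exp (Complex.I * ↑(∑ k ∈ Finset.range n, Y n k ω)) ∂μ)
      atTop (𝓝 ↑(∫ ω in H, Real.exp (-V ω / 2) ∂μ)) := by
  have hU : AEStronglyMeasurable (fun ω => Real.exp (-V ω / 2)) μ :=
    (hV.neg.div_const 2).exp.aestronglyMeasurable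
  have hlt (N : ℕ) : MeasurableSet {ω | V ω < N} := hV measurableSet_Iio
  rw [← integral_complex_ofReal]
  refine tendsto_setIntegral_of_forall_inter (B := 1) (s := fun N : ℕ => {ω | V ω < N})
    (fun n => (hY.integrable_exp_sum n).1) (fun n => Eventually.of_forall fun ω => ?_)
    (Integrable.of_bound hU 1 hY.norm_exp_neg_div_two_le_one).ofReal hH hlt
    (fun M N hMN ω (hω : V ω < M) => hω.trans_le (Nat.cast_le.2 hMN))
    (Set.iUnion_eq_univ_iff.2 fun ω => exists_nat_gt (V ω)) fun N => ?_
  · exact (mul_comm Complex.I _ ▸ Complex.norm_exp_ofReal_mul_I _).le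
  · rw [integral_complex_ofReal]
    exact hY.tendsto_setIntegral_exp_sum_of_lt hV N.cast_nonneg (hH.inter (hlt N)) fun ω hω => hω.2

theorem stableGaussLimit (hY : IsMcLeishArray Y V 𝒢 μ) :
    StableGaussLimit μ (fun n ω => ∑ k ∈ Finset.range n, Y n k ω) V := by
  have hsum (n : ℕ) : Measurable fun ω => ∑ k ∈ Finset.range n, Y n k ω :=
    (((hY.isMartingaleDiff n).stronglyMeasurable_sum n).mono (𝒢.le n)).measurable
  have hsum_sq (n : ℕ) : Measurable fun ω => ∑ k ∈ Finset.range n, Y n k ω ^ 2 :=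
    (((hY.isMartingaleDiff n).stronglyMeasurable_sum_sq n).mono (𝒢.le n)).measurable
  have hV : AEMeasurable V μ :=
    aemeasurable_of_tendsto_metrizable_ae' (fun n => (hsum_sq n).aemeasurable) hY.tendsto_sum_sq
  have hY' : IsMcLeishArray Y (hV.mk V) 𝒢 μ := hY.congr_ae hV.ae_eq_mk
  refine StableGaussLimit.congr_ae hV.ae_eq_mk.symm <|
    stableGaussLimit_of_tendsto_setIntegral (fun n => (hsum n).aemeasurable) hV.measurable_mk
      hY'.ae_nonneg fun t H hH => ?_
  simpa only [← Finset.mul_sum] using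
    (hY'.const_mul t).tendsto_setIntegral_exp_sum (hV.measurable_mk.const_mul (t ^ 2)) hH

end IsMcLeishArray

theorem IsMcLeishArray.of_integral_sq_sum_le {Ω : Type*} {mΩ : MeasurableSpace Ω} {μ : Measure Ω}
    [IsFiniteMeasure μ] {𝒢 : Filtration ℕ mΩ} {Y : ℕ → ℕ → Ω → ℝ} {V : Ω → ℝ} {K : ℝ}
    (hY : ∀ n, IsMartingaleDiff (Y n) 𝒢 μ) (hL2 : ∀ n k, MemLp (Y n k) 2 μ)
    (hK : ∀ n, ∫ ω, (∑ k ∈ Finset.range n, Y n k ω) ^ 2 ∂μ ≤ K)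
    (hmax : ∀ᵐ ω ∂μ, Tendsto (fun n => maxAbs (Y n · ω) n) atTop (𝓝 0))
    (hsq : ∀ᵐ ω ∂μ, Tendsto (fun n => ∑ k ∈ Finset.range n, Y n k ω ^ 2) atTop (𝓝 (V ω))) :
    IsMcLeishArray Y V 𝒢 μ := by
  refine ⟨hY, ?_, hmax, hsq⟩
  have hsum (n : ℕ) : Integrable (fun ω => ∑ k ∈ Finset.range n, Y n k ω ^ 2) μ :=
    integrable_finsetSum _ fun k _ => (hL2 n k).integrable_sq
  have hmaxL2 (n : ℕ) : Integrable (fun ω => maxAbs (Y n · ω) n ^ 2) μ := by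
    refine (hsum n).mono' ((hY n).measurable_maxAbs n |>.pow_const 2).aestronglyMeasurable ?_
    exact Eventually.of_forall fun ω => by
      simpa only [norm_pow, Real.norm_eq_abs, sq_abs] using sq_maxAbs_le_sum_sq (Y n · ω) n
  have hmean (n : ℕ) : ∫ ω, ‖maxAbs (Y n · ω) n‖ ^ 2 ∂μ ≤ K := by
    simp only [Real.norm_eq_abs, sq_abs]
    calc ∫ ω, maxAbs (Y n · ω) n ^ 2 ∂μ
        ≤ ∫ ω, ∑ k ∈ Finset.range n, Y n k ω ^ 2 ∂μ :=
          integral_mono (hmaxL2 n) (hsum n) fun ω => sq_maxAbs_le_sum_sq (Y n · ω) n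
      _ = ∫ ω, (∑ k ∈ Finset.range n, Y n k ω) ^ 2 ∂μ := by
          rw [integral_finsetSum _ fun k _ => (hL2 n k).integrable_sq,
            (hY n).integral_sq_sum (hL2 n)]
      _ ≤ K := hK n
  have hmaxL1 := tendsto_integral_norm_of_integral_sq_le (fun n => (memLp_two_iff_integrable_sq
    ((hY n).measurable_maxAbs n).aestronglyMeasurable).2 (hmaxL2 n)) hmean hmax
  simpa only [Real.norm_of_nonneg (maxAbs_nonneg _ _)] using hmaxL1

theorem IsMartingaleDiff.stableGaussLimit_sum_div_sqrt {Ω : Type*} {mΩ : MeasurableSpace Ω}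
    {μ : Measure Ω} [IsFiniteMeasure μ] {𝒢 : Filtration ℕ mΩ} {d : ℕ → Ω → ℝ} {V : Ω → ℝ} {K : ℝ}
    (hd : IsMartingaleDiff d 𝒢 μ)
    (hL2 : ∀ n : ℕ, MemLp (fun ω => (∑ k ∈ Finset.range n, d k ω) / √n) 2 μ)
    (hK : ∀ n : ℕ, ∫ ω, ((∑ k ∈ Finset.range n, d k ω) / √n) ^ 2 ∂μ ≤ K)
    (hsq : ∀ᵐ ω ∂μ,
      Tendsto (fun n : ℕ => (∑ k ∈ Finset.range n, d k ω ^ 2) / n) atTop (𝓝 (V ω))) :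
    StableGaussLimit μ (fun n ω => (∑ k ∈ Finset.range n, d k ω) / √n) V := by
  have hsumL2 (n : ℕ) : MemLp (fun ω => ∑ k ∈ Finset.range n, d k ω) 2 μ := by
    rcases eq_or_ne n 0 with rfl | hn
    · simp
    · refine ((hL2 n).const_mul √n).ae_eq (Eventually.of_forall fun ω => mul_div_cancel₀ _ ?_)
      exact (Real.sqrt_pos.2 (Nat.cast_pos.2 hn.pos)).ne'
  have hdL2 (k : ℕ) : MemLp (d k) 2 μ := by
    refine ((hsumL2 (k + 1)).sub (hsumL2 k)).ae_eq (Eventually.of_forall fun ω => ?_)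
    rw [Pi.sub_apply, Finset.sum_range_succ, add_sub_cancel_left]
  simp only [div_eq_inv_mul, Finset.mul_sum] at hK ⊢
  refine (IsMcLeishArray.of_integral_sq_sum_le (𝒢 := 𝒢) (fun n => hd.const_mul (√n)⁻¹)
    (fun n k => (hdL2 k).const_mul (√n)⁻¹) hK ?_ ?_).stableGaussLimit
  · filter_upwards [hsq] with ω hω
    refine (tendsto_maxAbs_div_sqrt hω).congr fun n => ?_
    rw [maxAbs_const_mul, abs_of_nonneg (by positivity), div_eq_inv_mul]
  · filter_upwards [hsq] with ω hω
    refine hω.congr fun n => ?_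
    simp only [mul_pow, ← Finset.mul_sum, inv_pow, Real.sq_sqrt n.cast_nonneg, div_eq_inv_mul]

/-! ### Conditionally identically distributed sequences -/

/-- The `k`-th summand (counted from `0`) of the average `M n`, as a random variable, for a real
sequence `ξ k` in the role of `f (X k)`: the increment from time `k` to time `k + 1` of
`∑ k ∈ Icc 1 n, ξ k - n * μ[ξ (n + 1)|𝒢 n]`. -/
noncomputable def predictiveDiff {Ω : Type*} {mΩ : MeasurableSpace Ω} (μ : Measure Ω)
    (𝒢 : Filtration ℕ mΩ) (ξ : ℕ → Ω → ℝ) (k : ℕ) (ω : Ω) : ℝ :=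
  ξ (k + 1) ω - (k + 1) * (μ[ξ (k + 2)|𝒢 (k + 1)]) ω + k * (μ[ξ (k + 1)|𝒢 k]) ω

section PredictiveDiff

variable {Ω : Type*} {mΩ : MeasurableSpace Ω} {μ : Measure Ω} {𝒢 : Filtration ℕ mΩ}
  {ξ : ℕ → Ω → ℝ}

lemma sum_predictiveDiff (n : ℕ) (ω : Ω) :
    ∑ k ∈ Finset.range n, predictiveDiff μ 𝒢 ξ k ω
      = ∑ k ∈ Finset.Icc 1 n, ξ k ω - n * (μ[ξ (n + 1)|𝒢 n]) ω := by
  induction n with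
  | zero => simp
  | succ n ih =>
    rw [Finset.sum_range_succ, ih, Finset.sum_Icc_succ_top n.succ_pos, predictiveDiff]
    push_cast
    ring

lemma sum_sq_predictiveDiff (n : ℕ) (ω : Ω) :
    ∑ k ∈ Finset.range n, predictiveDiff μ 𝒢 ξ k ω ^ 2
      = ∑ k ∈ Finset.Icc 1 n, (ξ k ω - k * (μ[ξ (k + 1)|𝒢 k]) ω
        + (k - 1 : ℝ) * (μ[ξ k|𝒢 (k - 1)]) ω) ^ 2 := by
  induction n with
  | zero => simp
  | succ n ih =>
    rw [Finset.sum_range_succ, ih, Finset.sum_Icc_succ_top n.succ_pos, predictiveDiff]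
    simp only [Nat.cast_succ, add_sub_cancel_right, Nat.add_sub_cancel]

end PredictiveDiff

namespace IsCID

variable {Ω E : Type*} {mΩ : MeasurableSpace Ω} [MeasurableSpace E] {μ : Measure Ω}
  [IsFiniteMeasure μ] {𝒢 : Filtration ℕ mΩ} {X : ℕ → Ω → E} {f : E → ℝ}

lemma identDistrib_restrict (hcid : IsCID μ 𝒢 X) (hX : ∀ n, 1 ≤ n → Measurable (X n)) {n k : ℕ}
    (hnk : n < k) {s : Set Ω} (hs : MeasurableSet[𝒢 n] s) :
    IdentDistrib (X k) (X (n + 1)) (μ.restrict s) (μ.restrict s) := by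
  have hXn : Measurable (X (n + 1)) := hX (n + 1) n.succ_pos
  have hXk : Measurable (X k) := hX k (by omega)
  refine ⟨hXk.aemeasurable, hXn.aemeasurable, Measure.ext fun A hA => ?_⟩
  rw [Measure.map_apply hXk hA, Measure.map_apply hXn hA, ← measureReal_eq_measureReal_iff]
  have hcondExp := hcid (A.indicator 1) (measurable_one.indicator hA)
    ⟨1, fun x => norm_indicator_le_norm_self (1 : E → ℝ) x |>.trans_eq norm_one⟩ n k hnk
  have hset {Z : Ω → E} (hZ : Measurable Z) :
      ∫ ω in s, μ[fun ω => A.indicator (1 : E → ℝ) (Z ω) | 𝒢 n] ω ∂μ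
        = (μ.restrict s).real (Z ⁻¹' A) := by
    rw [setIntegral_condExp (𝒢.le n) ((integrable_const 1).indicator (hZ hA)) hs]
    exact integral_indicator_one (hZ hA)
  rw [← hset hXk, ← hset hXn, integral_congr_ae (ae_restrict_of_ae hcondExp)]

lemma integrable_comp (hcid : IsCID μ 𝒢 X) (hX : ∀ n, 1 ≤ n → Measurable (X n))
    (hf : Measurable f) (hint : Integrable (fun ω => f (X 1 ω)) μ) {k : ℕ} (hk : 1 ≤ k) :
    Integrable (fun ω => f (X k ω)) μ := by
  have hident := hcid.identDistrib_restrict hX hk MeasurableSet.univ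
  rw [Measure.restrict_univ] at hident
  exact (hident.comp hf).integrable_iff.2 hint

lemma condExp_comp_ae_eq (hcid : IsCID μ 𝒢 X) (hX : ∀ n, 1 ≤ n → Measurable (X n))
    (hf : Measurable f) (hint : Integrable (fun ω => f (X 1 ω)) μ) {n k : ℕ} (hnk : n < k) :
    μ[fun ω => f (X k ω) | 𝒢 n] =ᵐ[μ] μ[fun ω => f (X (n + 1) ω) | 𝒢 n] := by
  have hXint {j : ℕ} (hj : 1 ≤ j) : Integrable (fun ω => f (X j ω)) μ :=
    hcid.integrable_comp hX hf hint hj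
  refine (ae_eq_condExp_of_forall_setIntegral_eq (𝒢.le n) (hXint (by omega))
    (fun _ _ _ => integrable_condExp.integrableOn) (fun s hs _ => ?_)
    stronglyMeasurable_condExp.aestronglyMeasurable).symm
  rw [setIntegral_condExp (𝒢.le n) (hXint n.succ_pos) hs]
  exact ((hcid.identDistrib_restrict hX hnk hs).comp hf).integral_eq.symm

lemma condExp_predictiveDiff_ae_eq_zero (hcid : IsCID μ 𝒢 X) (hX : ∀ n, 1 ≤ n → Measurable (X n))
    (hf : Measurable f) (hint : Integrable (fun ω => f (X 1 ω)) μ) (k : ℕ) :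
    μ[predictiveDiff μ 𝒢 (fun k ω => f (X k ω)) k | 𝒢 k] =ᵐ[μ] 0 := by
  set Z : ℕ → Ω → ℝ := fun n => μ[fun ω => f (X (n + 1) ω) | 𝒢 n]
  have hZ (n : ℕ) : Integrable (Z n) μ := integrable_condExp
  have hXint : Integrable (fun ω => f (X (k + 1) ω)) μ :=
    hcid.integrable_comp hX hf hint k.succ_pos
  have hself : μ[Z k | 𝒢 k] = Z k :=
    condExp_of_stronglyMeasurable (𝒢.le k) stronglyMeasurable_condExp (hZ k)
  have hnext : μ[Z (k + 1) | 𝒢 k] =ᵐ[μ] Z k :=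
    (condExp_condExp_of_le (𝒢.mono k.le_succ) (𝒢.le (k + 1))).trans
      (hcid.condExp_comp_ae_eq hX hf hint (by omega))
  change μ[(fun ω => f (X (k + 1) ω)) - (k + 1 : ℝ) • Z (k + 1) + (k : ℝ) • Z k | 𝒢 k] =ᵐ[μ] 0
  filter_upwards [
    condExp_add (hXint.sub ((hZ (k + 1)).smul (k + 1 : ℝ))) ((hZ k).smul (k : ℝ)) (𝒢 k),
    condExp_sub hXint ((hZ (k + 1)).smul (k + 1 : ℝ)) (𝒢 k),
    condExp_smul (μ := μ) (k + 1 : ℝ) (Z (k + 1)) (𝒢 k),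
    condExp_smul (μ := μ) (k : ℝ) (Z k) (𝒢 k), hnext] with ω hadd hsub hsmul_next hsmul hnextω
  rw [hadd, Pi.add_apply, hsub, Pi.sub_apply, hsmul_next, hsmul, hself]
  simp only [Pi.smul_apply, smul_eq_mul, Pi.zero_apply, hnextω]
  ring

theorem isMartingaleDiff_predictiveDiff (hcid : IsCID μ 𝒢 X)
    (hX : ∀ n, 1 ≤ n → Measurable[𝒢 n] (X n)) (hf : Measurable f)
    (hint : Integrable (fun ω => f (X 1 ω)) μ) :
    IsMartingaleDiff (predictiveDiff μ 𝒢 (fun k ω => f (X k ω))) 𝒢 μ := by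
  have hX' (n : ℕ) (hn : 1 ≤ n) : Measurable (X n) := (hX n hn).mono (𝒢.le n) le_rfl
  refine ⟨fun k => ?_, fun k => ?_, hcid.condExp_predictiveDiff_ae_eq_zero hX' hf hint⟩
  · exact (((hf.comp (hX (k + 1) k.succ_pos)).stronglyMeasurable).sub
      (stronglyMeasurable_condExp.const_mul _)).add
      ((stronglyMeasurable_condExp.mono (𝒢.mono k.le_succ)).const_mul _)
  · exact ((hcid.integrable_comp hX' hf hint k.succ_pos).sub
      (integrable_condExp.const_mul _)).add (integrable_condExp.const_mul _)

end IsCID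

theorem stmt19_general {Ω E : Type*} {mΩ : MeasurableSpace Ω} [MeasurableSpace E]
    (μ : Measure Ω) [IsFiniteMeasure μ] (𝒢 : Filtration ℕ mΩ) (X : ℕ → Ω → E)
    (hadp : ∀ n, 1 ≤ n → Measurable[𝒢 n] (X n))
    (hcid : IsCID μ 𝒢 X)
    (f : E → ℝ) (hf : Measurable f)
    (hint1 : Integrable (fun ω => f (X 1 ω)) μ)
    (C : ℕ → Ω → ℝ)
    (hC : ∀ n ω, C n ω = ((∑ k ∈ Finset.Icc 1 n, f (X k ω))
      - n * (μ[(fun ω' => f (X (n + 1) ω')) | 𝒢 n]) ω) / Real.sqrt n)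
    (hCL2 : ∀ n, Integrable (fun ω => (C n ω) ^ 2) μ)
    (hCbd : ∃ K : ℝ, ∀ n, ∫ ω, (C n ω) ^ 2 ∂μ ≤ K)
    (σsq : Ω → ℝ)
    (hM : ∀ᵐ ω ∂μ, Tendsto (fun n => (∑ k ∈ Finset.Icc 1 n,
        (f (X k ω) - k * (μ[(fun ω' => f (X (k + 1) ω')) | 𝒢 k]) ω
          + (k - 1 : ℝ) * (μ[(fun ω' => f (X k ω')) | 𝒢 (k - 1)]) ω) ^ 2) / (n : ℝ))
      atTop (nhds (σsq ω))) :
    StableGaussLimit μ C σsq := by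
  obtain ⟨K, hK⟩ := hCbd
  have hd : IsMartingaleDiff (predictiveDiff μ 𝒢 fun k ω => f (X k ω)) 𝒢 μ :=
    hcid.isMartingaleDiff_predictiveDiff hadp hf hint1
  set d : ℕ → Ω → ℝ := predictiveDiff μ 𝒢 fun k ω => f (X k ω) with hd_def
  have hCd : C = fun n ω => (∑ k ∈ Finset.range n, d k ω) / √n := by
    ext n ω
    rw [hC, hd_def, sum_predictiveDiff]
  have hCmeas (n : ℕ) : Measurable fun ω => (∑ k ∈ Finset.range n, d k ω) / √n :=
    ((hd.stronglyMeasurable_sum n).mono (𝒢.le n)).measurable.div_const _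
  subst hCd
  refine hd.stableGaussLimit_sum_div_sqrt (fun n => ?_) hK ?_
  · exact (memLp_two_iff_integrable_sq (hCmeas n).aestronglyMeasurable).2 (hCL2 n)
  · simpa only [hd_def, sum_sq_predictiveDiff] using hM

/-- CLT (case III, predictive centering): if `(X n)` is `𝒢`-c.i.d., `f (X 1)` and
`f (X 1)²` are integrable, `sup_n E[C n ²] < ∞` where
`C n = n^{-1/2} (f (X 1) + ⋯ + f (X n) − n E[f (X (n+1)) | 𝒢 n])`, and
`M n = (1/n) ∑_{k=1}^n (f (X k) − k E[f (X (k+1)) | 𝒢 k] + (k−1) E[f (X k) | 𝒢 (k−1)])²`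
converges a.s. to a real random variable `σ²`, then `(C n)` converges stably with
representing measure `N(0, σ²)`. -/
theorem stmt19 {Ω E : Type*} {mΩ : MeasurableSpace Ω} [MeasurableSpace E]
    (μ : Measure Ω) [IsProbabilityMeasure μ] (𝒢 : Filtration ℕ mΩ) (X : ℕ → Ω → E)
    (h𝒢0 : 𝒢 0 = (⊥ : MeasurableSpace Ω))
    (hadp : ∀ n, 1 ≤ n → Measurable[𝒢 n] (X n))
    (hcid : IsCID μ 𝒢 X)
    (f : E → ℝ) (hf : Measurable f)
    (hint1 : Integrable (fun ω => f (X 1 ω)) μ)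
    (hint2 : Integrable (fun ω => (f (X 1 ω)) ^ 2) μ)
    (C : ℕ → Ω → ℝ)
    (hC : ∀ n ω, C n ω = ((∑ k ∈ Finset.Icc 1 n, f (X k ω))
      - n * (μ[(fun ω' => f (X (n + 1) ω')) | 𝒢 n]) ω) / Real.sqrt n)
    (hCL2 : ∀ n, Integrable (fun ω => (C n ω) ^ 2) μ)
    (hCbd : ∃ K : ℝ, ∀ n, ∫ ω, (C n ω) ^ 2 ∂μ ≤ K)
    (σsq : Ω → ℝ)
    (hM : ∀ᵐ ω ∂μ, Tendsto (fun n => (∑ k ∈ Finset.Icc 1 n,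
        (f (X k ω) - k * (μ[(fun ω' => f (X (k + 1) ω')) | 𝒢 k]) ω
          + (k - 1 : ℝ) * (μ[(fun ω' => f (X k ω')) | 𝒢 (k - 1)]) ω) ^ 2) / (n : ℝ))
      atTop (nhds (σsq ω))) :
    StableGaussLimit μ C σsq :=
  stmt19_general μ 𝒢 X hadp hcid f hf hint1 C hC hCL2 hCbd σsq hM
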